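/- arXiv:2102.04120 — 2 statements merged into one kernel-verified Lean document; each statement's English description precedes it below -/
import Mathlib

section
/- Let R be a commutative ring with identity, n ≥ 2, and let g be an n×n upper unitriangular matrix over R (all diagonal entries equal 1, all entries below the diagonal equal 0). Fix k ≥ 1 and suppose that g_{i,j} = 0 whenever 0 < j − i < k. Then for every natural number m and every index i with i + k ≤ n, the (i, i+k) entry of g^m equals m · g_{i,i+k}. -/
/-!
Write `g = 1 + N`, where `N` is the off-diagonal part of `g`. Every nonzero entry of `N` lies at
least `k` places above the diagonal, and such offsets add up under multiplication, so in the
expansion of `(1 + N) ^ m` all terms beyond `1 + m • N` vanish less than `2 * k` places above the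
diagonal. In particular they do not reach the `k`-th superdiagonal.
-/

section LevelFiltration

variable {ι α R : Type*} [Semiring R]

section Basic

variable [Add α] [LT α]

/-- The square matrices whose nonzero entries raise the level `b : ι → α` by at least `d`. As `d`
grows these form a decreasing multiplicative filtration. The convention agrees
with `Matrix.BlockTriangular`, which is the case `d = 0`; for `ι = Fin n` and `b i = i`, membership
says that `M` vanishes below the `d`-th superdiagonal. -/
def levelFiltration (R : Type*) [Semiring R] (b : ι → α) (d : α) :
    AddSubmonoid (Matrix ι ι R) where
  carrier := {M | ∀ i j, b j < b i + d → M i j = 0}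
  zero_mem' _ _ _ := rfl
  add_mem' hM hN i j hij := by rw [Matrix.add_apply, hM i j hij, hN i j hij, add_zero]

variable {b : ι → α}

theorem mem_levelFiltration {d : α} {M : Matrix ι ι R} :
    M ∈ levelFiltration R b d ↔ ∀ i j, b j < b i + d → M i j = 0 :=
  Iff.rfl

theorem exists_mem_levelFiltration_eq_one_add [DecidableEq ι] {k : α} {g : Matrix ι ι R}
    (hdiag : ∀ i, g i i = 1) (hoff : ∀ i j, i ≠ j → b j < b i + k → g i j = 0) :
    ∃ N ∈ levelFiltration R b k, g = 1 + N := by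
  refine ⟨Matrix.of fun i j => if i = j then 0 else g i j, fun i j hij => ?_, ?_⟩
  · by_cases h : i = j
    · simp [h]
    · simp [h, hoff i j h hij]
  · ext i j
    by_cases h : i = j
    · simp [h, hdiag]
    · simp [h]

end Basic

variable [AddCommMonoid α] [LinearOrder α] [IsOrderedAddMonoid α] {b : ι → α}

theorem levelFiltration_antitone : Antitone (levelFiltration R b) :=
  fun _ _ hde _ hM i j hij => hM i j (hij.trans_le (by gcongr))

variable [Fintype ι]

theorem mul_mem_levelFiltration_add {d e : α} {M N : Matrix ι ι R}
    (hM : M ∈ levelFiltration R b d) (hN : N ∈ levelFiltration R b e) :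
    M * N ∈ levelFiltration R b (d + e) := by
  intro i j hij
  rw [Matrix.mul_apply]
  refine Finset.sum_eq_zero fun l _ => ?_
  rcases lt_or_ge (b l) (b i + d) with hil | hil
  · rw [hM i l hil, zero_mul]
  · have hlj : b j < b l + e :=
      calc b j < b i + d + e := by rwa [add_assoc]
        _ ≤ b l + e := by gcongr
    rw [hN l j hlj, mul_zero]

variable [DecidableEq ι]

theorem exists_mem_levelFiltration_one_add_pow_eq {k : α} (hk : 0 ≤ k) {N : Matrix ι ι R}
    (hN : N ∈ levelFiltration R b k) (m : ℕ) :
    ∃ E ∈ levelFiltration R b (k + k), (1 + N) ^ m = 1 + m • N + E := by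
  induction m with
  | zero => exact ⟨0, zero_mem _, by simp⟩
  | succ m ih =>
    obtain ⟨E, hE, hpow⟩ := ih
    have hNN : N * N ∈ levelFiltration R b (k + k) := mul_mem_levelFiltration_add hN hN
    have hEN : E * N ∈ levelFiltration R b (k + k) :=
      levelFiltration_antitone (le_add_of_nonneg_right hk) (mul_mem_levelFiltration_add hE hN)
    refine ⟨m • (N * N) + (E + E * N), add_mem (nsmul_mem hNN m) (add_mem hE hEN), ?_⟩
    rw [pow_succ, hpow, succ_nsmul]
    simp only [mul_add, add_mul, mul_one, one_mul, smul_mul_assoc]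
    abel

theorem pow_entry_of_unitriangular_band_general {k : α} (hk : 0 ≤ k) {g : Matrix ι ι R}
    (hdiag : ∀ i, g i i = 1) (hoff : ∀ i j, i ≠ j → b j < b i + k → g i j = 0)
    (m : ℕ) {i j : ι} (hne : i ≠ j) (hij : b j < b i + (k + k)) :
    (g ^ m) i j = m • g i j := by
  obtain ⟨N, hN, rfl⟩ := exists_mem_levelFiltration_eq_one_add hdiag hoff
  obtain ⟨E, hE, hpow⟩ := exists_mem_levelFiltration_one_add_pow_eq hk hN m
  have hEij : E i j = 0 := mem_levelFiltration.mp hE i j hij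
  rw [hpow]
  simp only [Matrix.add_apply, Matrix.smul_apply, Matrix.one_apply_ne hne, hEij, zero_add, add_zero]

end LevelFiltration

/-- Let `g` be an `n × n` upper unitriangular matrix over a commutative ring `R` (with `n ≥ 2`),
and let `k ≥ 1` be such that `g i j = 0` whenever `0 < j - i < k`.  Then for every natural
number `m` and all indices `i, j` with `j = i + k`, the `(i, j)` entry of `g ^ m` is
`m • g i j`. -/
theorem pow_entry_of_unitriangular_band {R : Type*} [CommRing R] {n : ℕ} (hn : 2 ≤ n)
    (g : Matrix (Fin n) (Fin n) R)
    (hdiag : ∀ i : Fin n, g i i = 1)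
    (hlow : ∀ i j : Fin n, (j : ℕ) < (i : ℕ) → g i j = 0)
    (k : ℕ) (hk : 1 ≤ k)
    (hband : ∀ i j : Fin n, (i : ℕ) < (j : ℕ) → (j : ℕ) - (i : ℕ) < k → g i j = 0)
    (m : ℕ) (i j : Fin n) (hij : (j : ℕ) = (i : ℕ) + k) :
    (g ^ m) i j = m • g i j := by
  have hoff (r s : Fin n) (hne : r ≠ s) (hrs : (s : ℕ) < r + k) : g r s = 0 :=
    (Fin.val_ne_of_ne hne).lt_or_gt.elim (fun hlt => hband r s hlt (by lia)) (hlow r s)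
  exact pow_entry_of_unitriangular_band_general k.zero_le hdiag hoff m (by lia) (by lia)
end

section
/- (Proposition: PSP reduction for unitriangular matrices) Let R be a commutative ring with identity, n ≥ 2, and let g be an n×n upper unitriangular matrix over R that is not the identity matrix. Then there exist indices i < j such that g_{i,j} ≠ 0 and, for every natural number m, the (i,j) entry of g^m equals m · g_{i,j}. Consequently, solving the power search problem for g in UT(n,R) reduces to solving the power search problem in the additive group of R. -/
/-!
Let `i` be the last row in which `g` differs from the identity matrix. Multiplication by `g` on the
left does not change the rows below `i`, so all powers of `g` have identity rows there. Expanding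
row `i` of `g * g ^ m`, the diagonal entry contributes row `i` of `g ^ m`, and the entries to its
right only meet identity rows and contribute themselves. Each power thus adds one more copy of the
off-diagonal part of row `i`, which is nonzero.
-/

theorem exists_ne_and_forall_gt_eq {ι : Type*} [LT ι] [WellFoundedGT ι] {α : ι → Type*}
    {f g : ∀ i, α i} (h : f ≠ g) : ∃ i, f i ≠ g i ∧ ∀ k, i < k → f k = g k := by
  obtain ⟨i, hi, hmax⟩ := wellFounded_gt.has_min {i | f i ≠ g i} (Function.ne_iff.mp h)
  exact ⟨i, hi, fun k hik => not_not.mp fun hk => hmax k hk hik⟩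

section Rows

variable {ι R : Type*} [Fintype ι] [DecidableEq ι]

theorem mul_apply_eq_add_of_rows_eq_one [NonAssocSemiring R] {g h : Matrix ι ι R} {i j : ι}
    (hij : i ≠ j) (hdiag : g i i = 1)
    (hrows : ∀ k, k ≠ i → g i k ≠ 0 → h k = (1 : Matrix ι ι R) k) :
    (g * h) i j = h i j + g i j := by
  have hterm : ∀ k ∈ Finset.univ.erase i,
      g i k * h k j = g i k * (1 : Matrix ι ι R) k j := by
    intro k hk
    rcases eq_or_ne (g i k) 0 with hzero | hnonzero
    · rw [hzero, zero_mul, zero_mul]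
    · rw [hrows k (Finset.ne_of_mem_erase hk) hnonzero]
  have hoff : ∑ k ∈ Finset.univ.erase i, g i k * (1 : Matrix ι ι R) k j = g i j := by
    simp [Matrix.one_apply, hij.symm]
  rw [Matrix.mul_apply, ← Finset.add_sum_erase _ _ (Finset.mem_univ i), hdiag, one_mul,
    Finset.sum_congr rfl hterm, hoff]

variable [Semiring R] {g : Matrix ι ι R} {i j : ι}

theorem pow_row_eq_one_of_row_eq_one (h : g i = (1 : Matrix ι ι R) i) (m : ℕ) :
    (g ^ m) i = (1 : Matrix ι ι R) i := by
  induction m with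
  | zero => rw [pow_zero]
  | succ m ih =>
    rw [pow_succ', Matrix.mul_apply_eq_vecMul, h, ← Matrix.mul_apply_eq_vecMul, one_mul, ih]

theorem pow_apply_eq_nsmul_of_rows_eq_one (hij : i ≠ j) (hdiag : g i i = 1)
    (hrows : ∀ k, k ≠ i → g i k ≠ 0 → g k = (1 : Matrix ι ι R) k) (m : ℕ) :
    (g ^ m) i j = m • g i j := by
  induction m with
  | zero => rw [pow_zero, Matrix.one_apply_ne hij, zero_nsmul]
  | succ m ih =>
    have hpow : ∀ k, k ≠ i → g i k ≠ 0 → (g ^ m) k = (1 : Matrix ι ι R) k :=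
      fun k hki hik => pow_row_eq_one_of_row_eq_one (hrows k hki hik) m
    rw [pow_succ', mul_apply_eq_add_of_rows_eq_one hij hdiag hpow, ih, succ_nsmul]

end Rows

theorem unitriangular_psp_reduction_general {ι R : Type*} [Fintype ι] [LinearOrder ι] [Semiring R]
    (g : Matrix ι ι R) (hdiag : ∀ i, g i i = 1) (htri : g.IsUpperTriangular) (hne : g ≠ 1) :
    ∃ i j, i < j ∧ g i j ≠ 0 ∧ ∀ m : ℕ, (g ^ m) i j = m • g i j := by
  obtain ⟨i, hi, hbelow⟩ := exists_ne_and_forall_gt_eq hne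
  obtain ⟨j, hj⟩ := Function.ne_iff.mp hi
  have hij : i ≠ j := by
    rintro rfl
    exact hj (by rw [hdiag, Matrix.one_apply_eq])
  rw [Matrix.one_apply_ne hij] at hj
  have hright : ∀ k, k ≠ i → g i k ≠ 0 → i < k :=
    fun k hki hik => hki.symm.lt_of_le (not_lt.mp fun hlt => hik (htri hlt))
  exact ⟨i, j, hright j hij.symm hj, hj, pow_apply_eq_nsmul_of_rows_eq_one hij (hdiag i)
    fun k hki hik => hbelow k (hright k hki hik)⟩

/-- PSP reduction for unitriangular matrices.  If `g` is an `n × n` upper unitriangular matrix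
over a commutative ring `R` (with `n ≥ 2`) and `g` is not the identity matrix, then there are
indices `i < j` with `g i j ≠ 0` such that the `(i, j)` entry of `g ^ m` equals `m • g i j`
for every natural number `m`.  Hence the power search problem for `g` in `UT(n, R)` reduces to
the power search problem in the additive group of `R`. -/
theorem unitriangular_psp_reduction {R : Type*} [CommRing R] {n : ℕ} (hn : 2 ≤ n)
    (g : Matrix (Fin n) (Fin n) R)
    (hdiag : ∀ i : Fin n, g i i = 1)
    (hlow : ∀ i j : Fin n, (j : ℕ) < (i : ℕ) → g i j = 0)
    (hne : g ≠ 1) :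
    ∃ i j : Fin n, (i : ℕ) < (j : ℕ) ∧ g i j ≠ 0 ∧
      ∀ m : ℕ, (g ^ m) i j = m • g i j := by
  exact unitriangular_psp_reduction_general g hdiag (fun i j => hlow i j) hne
end
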